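/- If m, f, g are non-negative integrable functions on ℝ satisfying m((r+s)/2) ≥ √(f(r)·g(s)) for all r, s ∈ ℝ, then ∫_ℝ m ≥ √(∫_ℝ f · ∫_ℝ g). -/

import Mathlib

open MeasureTheory

/-!
Let `p`, `q` be positive weights with sum `1`; the theorem is the case `p = q = 1 / 2`. If `f` and
`g` have the same supremum, then for every `t` below it the sets `{f > t}` and `{g > t}` are both
nonempty, and `p • {f > t} + q • {g > t} ⊆ {m > t}`. The one-dimensional Brunn–Minkowski inequality
compares the measures of these sets, and integrating over `t` gives `p ∫ f + q ∫ g ≤ ∫ m`, which is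
stronger than the claim by AM–GM. Since the claim is invariant under replacing `f` by `c f` and `m`
by `c ^ p m`, bounded `f` and `g` may be assumed to have the same supremum; monotone convergence
along truncations removes the boundedness.
-/

open Set
open scoped ENNReal NNReal Pointwise

theorem measure_eq_iSup_isCompact_nonempty {α : Type*} [TopologicalSpace α] [MeasurableSpace α]
    {μ : Measure α} [μ.InnerRegular] {A : Set α} (hA : NullMeasurableSet A μ) :
    μ A = ⨆ K, ⨆ (_ : K ⊆ A ∧ IsCompact K ∧ K.Nonempty), μ K := by
  refine le_antisymm (le_of_forall_lt fun r hr ↦ ?_) (iSup₂_le fun K hK ↦ measure_mono hK.1)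
  obtain ⟨A', hA'A, hA', hA'_ae⟩ := hA.exists_measurable_subset_ae_eq
  obtain ⟨K, hKA', hK, hrK⟩ := hA'.exists_lt_isCompact (hr.trans_eq (measure_congr hA'_ae).symm)
  have hK_nonempty : K.Nonempty := nonempty_of_measure_ne_zero (pos_of_gt hrK).ne'
  exact hrK.trans_le (le_iSup₂_of_le K ⟨hKA'.trans hA'A, hK, hK_nonempty⟩ le_rfl)

theorem volume_add_volume_le_volume_add_of_isCompact {K L : Set ℝ} (hK : IsCompact K)
    (hL : IsCompact L) (hK_nonempty : K.Nonempty) (hL_nonempty : L.Nonempty) :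
    volume K + volume L ≤ volume (K + L) := by
  obtain ⟨a, haK, ha⟩ := hK.exists_isGreatest hK_nonempty
  obtain ⟨b, hbL, hb⟩ := hL.exists_isLeast hL_nonempty
  have h_disjoint : AEDisjoint volume (b +ᵥ K) (a +ᵥ L) := by
    refine measure_mono_null (t := {a + b}) ?_ (measure_singleton _)
    rintro _ ⟨⟨x, hx, rfl⟩, y, hy, hxy⟩
    simp only [vadd_eq_add] at hxy ⊢
    exact mem_singleton_of_eq (by linarith [ha hx, hb hy])
  have h_subset : (b +ᵥ K) ∪ (a +ᵥ L) ⊆ K + L := by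
    rw [add_comm K L]
    refine union_subset (vadd_set_subset_add hbL) ?_
    rw [add_comm]
    exact vadd_set_subset_add haK
  calc volume K + volume L = volume (b +ᵥ K) + volume (a +ᵥ L) := by
        rw [measure_vadd, measure_vadd]
    _ = volume ((b +ᵥ K) ∪ (a +ᵥ L)) :=
        (measure_union₀ (hL.vadd a).measurableSet.nullMeasurableSet h_disjoint).symm
    _ ≤ volume (K + L) := measure_mono h_subset

theorem volume_add_volume_le_volume_add {A B : Set ℝ} (hA : NullMeasurableSet A)
    (hB : NullMeasurableSet B) (hA_nonempty : A.Nonempty) (hB_nonempty : B.Nonempty) :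
    volume A + volume B ≤ volume (A + B) := by
  have exists_compact {S : Set ℝ} (hS : S.Nonempty) : ∃ K ⊆ S, IsCompact K ∧ K.Nonempty :=
    let ⟨x, hx⟩ := hS
    ⟨{x}, singleton_subset_iff.2 hx, isCompact_singleton, singleton_nonempty x⟩
  rw [measure_eq_iSup_isCompact_nonempty hA, measure_eq_iSup_isCompact_nonempty hB]
  refine ENNReal.biSup_add_biSup_le' (exists_compact hA_nonempty) (exists_compact hB_nonempty) ?_
  rintro K ⟨hKA, hK, hK_nonempty⟩ L ⟨hLB, hL, hL_nonempty⟩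
  exact (volume_add_volume_le_volume_add_of_isCompact hK hL hK_nonempty hL_nonempty).trans
    (measure_mono (add_subset_add hKA hLB))

theorem ofReal_mul_volume_add_le_volume_smul_add_smul {p q : ℝ} (hp : 0 ≤ p) (hq : 0 ≤ q)
    {A B : Set ℝ} (hA : NullMeasurableSet A) (hB : NullMeasurableSet B)
    (hA_nonempty : A.Nonempty) (hB_nonempty : B.Nonempty) :
    ENNReal.ofReal p * volume A + ENNReal.ofReal q * volume B ≤ volume (p • A + q • B) := by
  simpa [abs_of_nonneg hp, abs_of_nonneg hq] using
    volume_add_volume_le_volume_add (Measure.NullMeasurableSet.const_smul hA p)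
      (Measure.NullMeasurableSet.const_smul hB q) hA_nonempty.smul_set hB_nonempty.smul_set

theorem lintegral_eq_lintegral_measure_ofReal_lt {α : Type*} [MeasurableSpace α] {μ : Measure α}
    {f : α → ℝ≥0∞} (hf : AEMeasurable f μ) :
    ∫⁻ x, f x ∂μ = ∫⁻ t in Ioi (0 : ℝ), μ {x | ENNReal.ofReal t < f x} := by
  by_cases hf_top : μ {x | f x = ∞} = 0
  · have hf_ae : ∀ᵐ x ∂μ, f x ≠ ∞ := by simpa [ae_iff] using hf_top
    calc ∫⁻ x, f x ∂μ = ∫⁻ x, ENNReal.ofReal (f x).toReal ∂μ :=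
          lintegral_congr_ae (hf_ae.mono fun x hx ↦ (ENNReal.ofReal_toReal hx).symm)
      _ = ∫⁻ t in Ioi (0 : ℝ), μ {x | t < (f x).toReal} :=
          lintegral_eq_lintegral_meas_lt μ (.of_forall fun _ ↦ ENNReal.toReal_nonneg)
            hf.ennreal_toReal
      _ = ∫⁻ t in Ioi (0 : ℝ), μ {x | ENNReal.ofReal t < f x} := by
          refine setLIntegral_congr_fun measurableSet_Ioi fun t ht ↦ measure_congr ?_
          filter_upwards [hf_ae] with x hx
          exact propext (ENNReal.ofReal_lt_iff_lt_toReal (le_of_lt ht) hx).symm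
  · rw [lintegral_eq_top_of_measure_eq_top_ne_zero hf hf_top, eq_comm, eq_top_iff]
    calc ∞ = ∫⁻ _ in Ioi (0 : ℝ), μ {x | f x = ∞} := by simp [ENNReal.mul_top hf_top]
      _ ≤ ∫⁻ t in Ioi (0 : ℝ), μ {x | ENNReal.ofReal t < f x} :=
          lintegral_mono fun t ↦ measure_mono fun x (hx : f x = ∞) ↦
            ENNReal.ofReal_lt_top.trans_eq hx.symm

theorem ennreal_geom_mean_le_arith_mean2_weighted {p q : ℝ} (hp : 0 ≤ p) (hq : 0 ≤ q)
    (hpq : p + q = 1) (x y : ℝ≥0∞) :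
    x ^ p * y ^ q ≤ ENNReal.ofReal p * x + ENNReal.ofReal q * y := by
  rcases hp.eq_or_lt with rfl | hp_pos
  · simp [show q = 1 by simpa using hpq]
  rcases hq.eq_or_lt with rfl | hq_pos
  · simp [show p = 1 by simpa using hpq]
  induction x with
  | top => simp [ENNReal.mul_top, hp_pos]
  | coe x =>
    induction y with
    | top => simp [ENNReal.mul_top, hq_pos]
    | coe y =>
      lift p to ℝ≥0 using hp
      lift q to ℝ≥0 using hq
      rw [← ENNReal.coe_rpow_of_nonneg _ hp_pos.le, ← ENNReal.coe_rpow_of_nonneg _ hq_pos.le,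
        ENNReal.ofReal_coe_nnreal, ENNReal.ofReal_coe_nnreal]
      exact_mod_cast NNReal.geom_mean_le_arith_mean2_weighted p q x y (by exact_mod_cast hpq)

theorem iSup_lintegral_min_natCast {α : Type*} [MeasurableSpace α] {μ : Measure α}
    {f : α → ℝ≥0∞} (hf : AEMeasurable f μ) :
    ⨆ n : ℕ, ∫⁻ x, min (f x) n ∂μ = ∫⁻ x, f x ∂μ := by
  rw [← lintegral_iSup' (fun n ↦ hf.min aemeasurable_const)
    (.of_forall fun x n k hnk ↦ min_le_min_left _ (Nat.cast_le.2 hnk))]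
  refine lintegral_congr fun x ↦ ?_
  rw [← inf_iSup_eq, ENNReal.iSup_natCast, inf_top_eq]

section

variable {p q : ℝ} {m f g : ℝ → ℝ≥0∞}

theorem smul_superlevel_add_smul_superlevel_subset (hp : 0 < p) (hq : 0 < q) (hpq : p + q = 1)
    (h : ∀ x y, f x ^ p * g y ^ q ≤ m (p * x + q * y)) (t : ℝ≥0∞) :
    p • {x | t < f x} + q • {y | t < g y} ⊆ {z | t < m z} := by
  rintro _ ⟨_, ⟨x, hx, rfl⟩, _, ⟨y, hy, rfl⟩, rfl⟩
  calc t = t ^ p * t ^ q := by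
        rw [← ENNReal.rpow_add_of_nonneg _ _ hp.le hq.le, hpq, ENNReal.rpow_one]
    _ < f x ^ p * g y ^ q :=
        ENNReal.mul_lt_mul (ENNReal.rpow_lt_rpow hx hp) (ENNReal.rpow_lt_rpow hy hq)
    _ ≤ m (p * x + q * y) := h x y

theorem ofReal_mul_volume_superlevel_add_le_of_iSup_eq (hp : 0 < p) (hq : 0 < q) (hpq : p + q = 1)
    (hf : AEMeasurable f) (hg : AEMeasurable g) (hfg : ⨆ x, f x = ⨆ y, g y)
    (h : ∀ x y, f x ^ p * g y ^ q ≤ m (p * x + q * y)) (t : ℝ≥0∞) :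
    ENNReal.ofReal p * volume {x | t < f x} + ENNReal.ofReal q * volume {y | t < g y} ≤
      volume {z | t < m z} := by
  rcases lt_or_ge t (⨆ x, f x) with ht | ht
  · have hf_null : NullMeasurableSet {x | t < f x} := nullMeasurableSet_lt aemeasurable_const hf
    have hg_null : NullMeasurableSet {y | t < g y} := nullMeasurableSet_lt aemeasurable_const hg
    have hf_nonempty : {x | t < f x}.Nonempty := lt_iSup_iff.1 ht
    have hg_nonempty : {y | t < g y}.Nonempty := lt_iSup_iff.1 (ht.trans_eq hfg)
    calc ENNReal.ofReal p * volume {x | t < f x} + ENNReal.ofReal q * volume {y | t < g y}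
        ≤ volume (p • {x | t < f x} + q • {y | t < g y}) :=
          ofReal_mul_volume_add_le_volume_smul_add_smul hp.le hq.le hf_null hg_null hf_nonempty
            hg_nonempty
      _ ≤ volume {z | t < m z} :=
          measure_mono (smul_superlevel_add_smul_superlevel_subset hp hq hpq h t)
  · have hf_empty : {x | t < f x} = ∅ :=
      eq_empty_of_forall_notMem fun x ↦ ((le_iSup f x).trans ht).not_gt
    have hg_empty : {y | t < g y} = ∅ :=
      eq_empty_of_forall_notMem fun y ↦ ((le_iSup g y).trans (hfg.ge.trans ht)).not_gt
    simp [hf_empty, hg_empty]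

theorem ofReal_mul_lintegral_add_le_of_iSup_eq (hp : 0 < p) (hq : 0 < q) (hpq : p + q = 1)
    (hm : AEMeasurable m) (hf : AEMeasurable f) (hg : AEMeasurable g)
    (hfg : ⨆ x, f x = ⨆ y, g y) (h : ∀ x y, f x ^ p * g y ^ q ≤ m (p * x + q * y)) :
    ENNReal.ofReal p * (∫⁻ x, f x) + ENNReal.ofReal q * ∫⁻ y, g y ≤ ∫⁻ z, m z := by
  rw [lintegral_eq_lintegral_measure_ofReal_lt hf, lintegral_eq_lintegral_measure_ofReal_lt hg,
    lintegral_eq_lintegral_measure_ofReal_lt hm, ← lintegral_const_mul' _ _ ENNReal.ofReal_ne_top,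
    ← lintegral_const_mul' _ _ ENNReal.ofReal_ne_top]
  exact (le_lintegral_add _ _).trans <| lintegral_mono fun t ↦
    ofReal_mul_volume_superlevel_add_le_of_iSup_eq hp hq hpq hf hg hfg h (ENNReal.ofReal t)

theorem lintegral_rpow_mul_lintegral_rpow_le_of_iSup_ne_top (hp : 0 < p) (hq : 0 < q)
    (hpq : p + q = 1) (hm : AEMeasurable m) (hf : AEMeasurable f) (hg : AEMeasurable g)
    (hf_top : ⨆ x, f x ≠ ∞) (hg_top : ⨆ y, g y ≠ ∞)
    (h : ∀ x y, f x ^ p * g y ^ q ≤ m (p * x + q * y)) :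
    (∫⁻ x, f x) ^ p * (∫⁻ y, g y) ^ q ≤ ∫⁻ z, m z := by
  rcases eq_or_ne (⨆ x, f x) 0 with hf_zero | hf_zero
  · simp [ENNReal.iSup_eq_zero.1 hf_zero, hp]
  rcases eq_or_ne (⨆ y, g y) 0 with hg_zero | hg_zero
  · simp [ENNReal.iSup_eq_zero.1 hg_zero, hq]
  set c := (⨆ y, g y) / ⨆ x, f x
  have hc_top : c ≠ ∞ := ENNReal.div_ne_top hg_top hf_zero
  have hc_zero : c ≠ 0 := ENNReal.div_ne_zero.2 ⟨hg_zero, hf_top⟩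
  have hcp_top : c ^ p ≠ ∞ := ENNReal.rpow_ne_top_of_nonneg hp.le hc_top
  have hcp_zero : c ^ p ≠ 0 := (ENNReal.rpow_pos hc_zero.bot_lt hc_top).ne'
  have h_iSup : ⨆ x, c * f x = ⨆ y, g y := by
    rw [← ENNReal.mul_iSup, ENNReal.div_mul_cancel hf_zero hf_top]
  have h_scaled (x y : ℝ) : (c * f x) ^ p * g y ^ q ≤ c ^ p * m (p * x + q * y) := by
    rw [ENNReal.mul_rpow_of_nonneg _ _ hp.le, mul_assoc]
    gcongr
    exact h x y
  rw [← ENNReal.mul_le_mul_iff_right hcp_zero hcp_top]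
  calc c ^ p * ((∫⁻ x, f x) ^ p * (∫⁻ y, g y) ^ q)
      = (∫⁻ x, c * f x) ^ p * (∫⁻ y, g y) ^ q := by
        rw [lintegral_const_mul' _ _ hc_top, ENNReal.mul_rpow_of_nonneg _ _ hp.le, mul_assoc]
    _ ≤ ENNReal.ofReal p * (∫⁻ x, c * f x) + ENNReal.ofReal q * ∫⁻ y, g y :=
        ennreal_geom_mean_le_arith_mean2_weighted hp.le hq.le hpq _ _
    _ ≤ ∫⁻ z, c ^ p * m z :=
        ofReal_mul_lintegral_add_le_of_iSup_eq hp hq hpq (hm.const_mul _) (hf.const_mul _)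
          hg h_iSup h_scaled
    _ = c ^ p * ∫⁻ z, m z := lintegral_const_mul' _ _ hcp_top

theorem prekopa_leindler_one_dim_general (hp : 0 < p) (hq : 0 < q) (hpq : p + q = 1)
    (hm : AEMeasurable m) (hf : AEMeasurable f) (hg : AEMeasurable g)
    (h : ∀ x y, f x ^ p * g y ^ q ≤ m (p * x + q * y)) :
    (∫⁻ x, f x) ^ p * (∫⁻ y, g y) ^ q ≤ ∫⁻ z, m z := by
  have iSup_min_ne_top (u : ℝ → ℝ≥0∞) (n : ℕ) : ⨆ x, min (u x) n ≠ ∞ :=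
    ne_top_of_le_ne_top (ENNReal.natCast_ne_top n) (iSup_le fun _ ↦ min_le_right _ _)
  have h_truncated (n k : ℕ) :
      (∫⁻ x, min (f x) n) ^ p * (∫⁻ y, min (g y) k) ^ q ≤ ∫⁻ z, m z := by
    refine lintegral_rpow_mul_lintegral_rpow_le_of_iSup_ne_top hp hq hpq hm
      (hf.min aemeasurable_const) (hg.min aemeasurable_const) (iSup_min_ne_top f n)
      (iSup_min_ne_top g k) fun x y ↦ le_trans ?_ (h x y)
    gcongr <;> exact min_le_left _ _
  have iSup_rpow {r : ℝ} (hr : 0 < r) (u : ℕ → ℝ≥0∞) :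
      (⨆ n, u n) ^ r = ⨆ n, u n ^ r :=
    (ENNReal.orderIsoRpow r hr).map_iSup u
  rw [← iSup_lintegral_min_natCast hf, ← iSup_lintegral_min_natCast hg, iSup_rpow hp, iSup_rpow hq,
    ENNReal.iSup_mul]
  simp only [ENNReal.mul_iSup]
  exact iSup₂_le h_truncated

end

theorem ofReal_rpow_mul_rpow {a b p q : ℝ} (ha : 0 ≤ a) (hb : 0 ≤ b) (hp : 0 ≤ p) (hq : 0 ≤ q) :
    ENNReal.ofReal (a ^ p * b ^ q) = ENNReal.ofReal a ^ p * ENNReal.ofReal b ^ q := by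
  rw [ENNReal.ofReal_mul (Real.rpow_nonneg ha p), ENNReal.ofReal_rpow_of_nonneg ha hp,
    ENNReal.ofReal_rpow_of_nonneg hb hq]

theorem integral_rpow_mul_integral_rpow_le {p q : ℝ} {m f g : ℝ → ℝ} (hp : 0 < p) (hq : 0 < q)
    (hpq : p + q = 1) (hm_nonneg : ∀ x, 0 ≤ m x) (hf_nonneg : ∀ x, 0 ≤ f x)
    (hg_nonneg : ∀ x, 0 ≤ g x) (hm : Integrable m) (hf : Integrable f) (hg : Integrable g)
    (h : ∀ x y, f x ^ p * g y ^ q ≤ m (p * x + q * y)) :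
    (∫ x, f x) ^ p * (∫ y, g y) ^ q ≤ ∫ z, m z := by
  rw [← ENNReal.ofReal_le_ofReal_iff (integral_nonneg hm_nonneg),
    ofReal_rpow_mul_rpow (integral_nonneg hf_nonneg) (integral_nonneg hg_nonneg) hp.le hq.le,
    ofReal_integral_eq_lintegral_ofReal hf (.of_forall hf_nonneg),
    ofReal_integral_eq_lintegral_ofReal hg (.of_forall hg_nonneg),
    ofReal_integral_eq_lintegral_ofReal hm (.of_forall hm_nonneg)]
  refine prekopa_leindler_one_dim_general hp hq hpq hm.aemeasurable.ennreal_ofReal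
    hf.aemeasurable.ennreal_ofReal hg.aemeasurable.ennreal_ofReal fun x y ↦ ?_
  rw [← ofReal_rpow_mul_rpow (hf_nonneg x) (hg_nonneg y) hp.le hq.le]
  exact ENNReal.ofReal_le_ofReal (h x y)

/-- **Prékopa–Leindler inequality, one-dimensional multiplicative form.**
If `m, f, g` are non-negative integrable functions on `ℝ` satisfying
`m((r+s)/2) ≥ √(f(r)·g(s))` for all `r, s`, then `∫ m ≥ √(∫ f · ∫ g)`. -/
theorem prekopa_leindler_one_dim (m f g : ℝ → ℝ)
    (hm0 : ∀ x, 0 ≤ m x) (hf0 : ∀ x, 0 ≤ f x) (hg0 : ∀ x, 0 ≤ g x)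
    (hmi : Integrable m) (hfi : Integrable f) (hgi : Integrable g)
    (h : ∀ r s : ℝ, Real.sqrt (f r * g s) ≤ m ((r + s) / 2)) :
    Real.sqrt ((∫ x, f x) * ∫ x, g x) ≤ ∫ x, m x := by
  have sqrt_mul_eq {a : ℝ} (ha : 0 ≤ a) (b : ℝ) : √(a * b) = a ^ (1 / 2 : ℝ) * b ^ (1 / 2 : ℝ) := by
    rw [Real.sqrt_mul ha, Real.sqrt_eq_rpow, Real.sqrt_eq_rpow]
  have midpoint_eq (r s : ℝ) : (r + s) / 2 = 1 / 2 * r + 1 / 2 * s := by ring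
  simp only [sqrt_mul_eq (hf0 _), midpoint_eq] at h
  rw [sqrt_mul_eq (integral_nonneg hf0)]
  exact integral_rpow_mul_integral_rpow_le one_half_pos one_half_pos (add_halves 1) hm0 hf0 hg0
    hmi hfi hgi h
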